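/- arXiv:1911.05555 — 4 statements merged into one kernel-verified Lean document; each statement's English description precedes it below -/
import Mathlib

section
/- For any K, k ∈ T^d, a number z ∈ ℂ \ [E_min(K,k), E_max(K,k)] is an eigenvalue of the operator h(K,k) if and only if Δ_K(k; z) = 0. -/
open MeasureTheory Complex Filter Topology Set

noncomputable section

instance fact2pi : Fact (0 < 2 * Real.pi) := ⟨by positivity⟩

/-- The d-dimensional torus `(-π, π]^d` with its Haar (Lebesgue) measure. -/
abbrev Td (d : ℕ) : Type := Fin d → AddCircle (2 * Real.pi)

/-- The Hilbert space `L²(T^d)`. -/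
abbrev L2 (d : ℕ) := Lp ℂ 2 (volume : Measure (Td d))

/-- The Hilbert space `L²((T^d)²)`. -/
abbrev L2two (d : ℕ) := Lp ℂ 2 (volume : Measure (Td d × Td d))

/-- The Hilbert space `ℂ ⊕ L²(T^d)`. -/
abbrev Hkk (d : ℕ) := WithLp 2 (ℂ × L2 d)

/-- The zero-particle component of an element of `ℂ ⊕ L²(T^d)`. -/
def pk1 {d : ℕ} (f : Hkk d) : ℂ := (WithLp.equiv 2 (ℂ × L2 d) f).1

/-- The one-particle component of an element of `ℂ ⊕ L²(T^d)`. -/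
def pk2 {d : ℕ} (f : Hkk d) : L2 d := (WithLp.equiv 2 (ℂ × L2 d) f).2

variable {d : ℕ}

/-- `E_min(K,k) = min_q w₂(K; k, q)`. -/
def Emin (w₂ : Td d → Td d → Td d → ℝ) (K k : Td d) : ℝ := ⨅ q, w₂ K k q

/-- `E_max(K,k) = max_q w₂(K; k, q)`. -/
def Emax (w₂ : Td d → Td d → Td d → ℝ) (K k : Td d) : ℝ := ⨆ q, w₂ K k q

/-- `m_K = min_{p,q} w₂(K; p, q)`. -/
def mK (w₂ : Td d → Td d → Td d → ℝ) (K : Td d) : ℝ := ⨅ x : Td d × Td d, w₂ K x.1 x.2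

/-- `M_K = max_{p,q} w₂(K; p, q)`. -/
def MK (w₂ : Td d → Td d → Td d → ℝ) (K : Td d) : ℝ := ⨆ x : Td d × Td d, w₂ K x.1 x.2

/-- The Fredholm determinant
`Δ_K(k; z) = w₁(K,k) − z − (1/2) ∫ v₁(t)² / (w₂(K;k,t) − z) dt`. -/
def Delta (v₁ : Td d → ℝ) (w₁ : Td d → Td d → ℝ) (w₂ : Td d → Td d → Td d → ℝ)
    (K k : Td d) (z : ℂ) : ℂ :=
  (w₁ K k : ℂ) - z - (1 / 2) * ∫ t, (v₁ t : ℂ) ^ 2 / ((w₂ K k t : ℂ) - z)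

/-- The interval `[E_min(K,k), E_max(K,k)]`, viewed inside `ℂ`. -/
def bandKk (w₂ : Td d → Td d → Td d → ℝ) (K k : Td d) : Set ℂ :=
  Complex.ofReal '' Set.Icc (Emin w₂ K k) (Emax w₂ K k)

/-- The interval `[m_K, M_K]`, viewed inside `ℂ`. -/
def bigBand (w₂ : Td d → Td d → Td d → ℝ) (K : Td d) : Set ℂ :=
  Complex.ofReal '' Set.Icc (mK w₂ K) (MK w₂ K)

/-- The two-particle branch
`Λ_K = {z : ∃ k, z ∉ [E_min(K,k), E_max(K,k)] ∧ Δ_K(k; z) = 0}`. -/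
def LamK (v₁ : Td d → ℝ) (w₁ : Td d → Td d → ℝ) (w₂ : Td d → Td d → Td d → ℝ)
    (K : Td d) : Set ℂ :=
  {z | ∃ k, z ∉ bandKk w₂ K k ∧ Delta v₁ w₁ w₂ K k z = 0}

/-- `Σ_K = [m_K, M_K] ∪ Λ_K`. -/
def SigK (v₁ : Td d → ℝ) (w₁ : Td d → Td d → ℝ) (w₂ : Td d → Td d → Td d → ℝ)
    (K : Td d) : Set ℂ :=
  bigBand w₂ K ∪ LamK v₁ w₁ w₂ K

/-- The defining equations of the generalized Friedrichs model `h(K, k)` acting on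
`ℂ ⊕ L²(T^d)`:
`(h f)₀ = w₁(K,k) f₀ + (1/√2) ∫ v₁(s) f₁(s) ds` and
`(h f)₁(q) = (1/√2) v₁(q) f₀ + w₂(K; k, q) f₁(q)` (the first off-diagonal entry is `h₀₁` and
the second is its adjoint `h₀₁*`). -/
def IsGenFriedrichs {d : ℕ} (v₁ : Td d → ℝ) (w₁ : Td d → Td d → ℝ)
    (w₂ : Td d → Td d → Td d → ℝ) (K k : Td d) (h : Hkk d →L[ℂ] Hkk d) : Prop :=
  ∀ f : Hkk d,
    (pk1 (h f) = (w₁ K k : ℂ) * pk1 f +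
        (Real.sqrt 2 : ℂ)⁻¹ * (∫ s, (v₁ s : ℂ) * (pk2 f) s)) ∧
    (⇑(pk2 (h f)) =ᵐ[volume] fun q =>
        (Real.sqrt 2 : ℂ)⁻¹ * (v₁ q : ℂ) * pk1 f + (w₂ K k q : ℂ) * (pk2 f) q)

/-! If `h f = z • f` with `w - z` nonvanishing, the `L²` component of the equation reads
`f₁ = -f₀ v / (w - z)`. In particular `f₀ ≠ 0` for an eigenvector, and substituting `f₁` into the
scalar component leaves `f₀ (a - z - ∫ |v|² / (w - z)) = 0`. Conversely `(1, -v / (w - z))` is an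
eigenvector as soon as the bracket vanishes and `v / (w - z)` is square integrable. -/

theorem memLp_div_sub_of_continuous {𝕜 X : Type*} [NormedField 𝕜] [TopologicalSpace X]
    [CompactSpace X] [MeasurableSpace X] [OpensMeasurableSpace X] {μ : Measure X}
    [IsFiniteMeasureOnCompacts μ] {v w : X → 𝕜} {z : 𝕜} (hv : Continuous v) (hw : Continuous w)
    (hz : ∀ x, w x ≠ z) (p : ENNReal) : MemLp (fun x => v x / (w x - z)) p μ :=
  (hv.div (hw.sub continuous_const) fun x => sub_ne_zero.2 (hz x)).memLp_of_hasCompactSupport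
    (HasCompactSupport.of_compactSpace _)

section FriedrichsModel

open scoped ComplexConjugate

variable {𝕜 X : Type*} [RCLike 𝕜] [MeasurableSpace X] {μ : Measure X}

/-- The Hilbert space `𝕜 ⊕ L²(X, μ)` on which a Friedrichs model acts. -/
abbrev FriedrichsSpace (𝕜 : Type*) {X : Type*} [RCLike 𝕜] [MeasurableSpace X] (μ : Measure X) :
    Type _ :=
  WithLp 2 (𝕜 × Lp 𝕜 2 μ)

/-- `h` is the Friedrichs model with block matrix `!![a, ⟨v, ·⟩; v, w]`, where `w` acts by
multiplication. These formulas determine `h` and force it to be linear, so `h` is encoded as a bare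
function. Applied to `(1, 0)` they also give `v ∈ L²`, so the integral always converges. -/
def IsFriedrichsModel (a : 𝕜) (v w : X → 𝕜) (h : FriedrichsSpace 𝕜 μ → FriedrichsSpace 𝕜 μ) :
    Prop :=
  ∀ f, (h f).fst = a * f.fst + ∫ x, conj (v x) * f.snd x ∂μ ∧
    (h f).snd =ᵐ[μ] fun x => v x * f.fst + w x * f.snd x

/-- The Fredholm determinant `a - z - ∫ |v|² / (w - z) dμ` of a Friedrichs model. The integral
converges when `v` and `v / (w - z)` are square integrable; where it diverges it is read as `0`. -/
def friedrichsDet (μ : Measure X) (a : 𝕜) (v w : X → 𝕜) (z : 𝕜) : 𝕜 :=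
  a - z - ∫ x, (‖v x‖ : 𝕜) ^ 2 / (w x - z) ∂μ

variable {a z : 𝕜} {v w : X → 𝕜} {h : FriedrichsSpace 𝕜 μ → FriedrichsSpace 𝕜 μ}

theorem integral_conj_mul_eq_of_ae_eq_div {c : 𝕜} {g : X → 𝕜}
    (hg : g =ᵐ[μ] fun x => c * (v x / (w x - z))) :
    ∫ x, conj (v x) * g x ∂μ = c * ∫ x, (‖v x‖ : 𝕜) ^ 2 / (w x - z) ∂μ := by
  rw [← integral_const_mul]
  refine integral_congr_ae (hg.mono fun x hx => ?_)
  simp only [hx, ← RCLike.conj_mul]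
  ring

namespace IsFriedrichsModel

theorem apply_eq_smul_iff (hh : IsFriedrichsModel a v w h) (f : FriedrichsSpace 𝕜 μ) :
    h f = z • f ↔ a * f.fst + ∫ x, conj (v x) * f.snd x ∂μ = z * f.fst ∧
      ∀ᵐ x ∂μ, v x * f.fst + w x * f.snd x = z * f.snd x := by
  obtain ⟨h_fst, h_snd⟩ := hh f
  have h_ext : h f = z • f ↔ (h f).fst = z * f.fst ∧ (h f).snd = z • f.snd := by
    rw [← (WithLp.equiv 2 (𝕜 × Lp 𝕜 2 μ)).injective.eq_iff, Prod.ext_iff]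
    rfl
  rw [h_ext, h_fst, Lp.ext_iff]
  refine and_congr_right' ⟨fun h_eq => ?_, fun h_eq => ?_⟩ <;>
    filter_upwards [h_eq, h_snd, Lp.coeFn_smul z f.snd] with x hx hx_snd hx_smul
  · rwa [hx_snd, hx_smul] at hx
  · rwa [hx_snd, hx_smul]

theorem apply_eq_smul_iff_of_ae_ne (hh : IsFriedrichsModel a v w h) (hz : ∀ᵐ x ∂μ, w x ≠ z)
    (f : FriedrichsSpace 𝕜 μ) :
    h f = z • f ↔ f.fst * friedrichsDet μ a v w z = 0 ∧
      f.snd =ᵐ[μ] fun x => -f.fst * (v x / (w x - z)) := by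
  have h_solve : (∀ᵐ x ∂μ, v x * f.fst + w x * f.snd x = z * f.snd x) ↔
      f.snd =ᵐ[μ] fun x => -f.fst * (v x / (w x - z)) := by
    refine eventually_congr (hz.mono fun x hx => ?_)
    beta_reduce
    rw [← mul_div_assoc, eq_div_iff (sub_ne_zero.2 hx)]
    constructor <;> intro h_eq <;> linear_combination h_eq
  rw [hh.apply_eq_smul_iff, h_solve]
  refine and_congr_left fun h_snd => ?_
  rw [integral_conj_mul_eq_of_ae_eq_div h_snd, friedrichsDet]
  constructor <;> intro h_eq <;> linear_combination h_eq

theorem fst_ne_zero_of_apply_eq_smul (hh : IsFriedrichsModel a v w h) (hz : ∀ᵐ x ∂μ, w x ≠ z)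
    {f : FriedrichsSpace 𝕜 μ} (hf : f ≠ 0) (h_eigen : h f = z • f) : f.fst ≠ 0 := by
  intro h_fst
  obtain ⟨-, h_snd⟩ := (hh.apply_eq_smul_iff_of_ae_ne hz f).1 h_eigen
  refine hf ((WithLp.equiv 2 (𝕜 × Lp 𝕜 2 μ)).injective (Prod.ext h_fst ?_))
  refine (Lp.eq_zero_iff_ae_eq_zero (f := f.snd)).2 (h_snd.trans ?_)
  simp [h_fst, Pi.zero_def]

end IsFriedrichsModel

theorem eigenvalue_iff_Delta_eq_zero_general (hh : IsFriedrichsModel a v w h)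
    (hz : ∀ᵐ x ∂μ, w x ≠ z) :
    (∃ f, f ≠ 0 ∧ h f = z • f) ↔
      MemLp (fun x => v x / (w x - z)) 2 μ ∧ friedrichsDet μ a v w z = 0 := by
  constructor
  · rintro ⟨f, hf, h_eigen⟩
    have h_fst := hh.fst_ne_zero_of_apply_eq_smul hz hf h_eigen
    obtain ⟨h_det, h_snd⟩ := (hh.apply_eq_smul_iff_of_ae_ne hz f).1 h_eigen
    refine ⟨((Lp.memLp f.snd).const_mul (-f.fst)⁻¹).ae_eq ?_,
      (mul_eq_zero_iff_left h_fst).1 h_det⟩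
    filter_upwards [h_snd] with x hx
    rw [hx, inv_mul_cancel_left₀ (neg_ne_zero.2 h_fst)]
  · rintro ⟨h_mem, h_det⟩
    refine ⟨WithLp.toLp 2 (1, (h_mem.const_mul (-1)).toLp), fun h_zero => ?_,
      (hh.apply_eq_smul_iff_of_ae_ne hz _).2 ⟨?_, (h_mem.const_mul (-1)).coeFn_toLp⟩⟩
    · exact one_ne_zero (congrArg WithLp.fst h_zero)
    · rw [h_det, mul_zero]

end FriedrichsModel

section Torus

variable {v₁ : Td d → ℝ} {w₁ : Td d → Td d → ℝ} {w₂ : Td d → Td d → Td d → ℝ} {K k : Td d}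

theorem IsGenFriedrichs.isFriedrichsModel {h : Hkk d →L[ℂ] Hkk d}
    (hh : IsGenFriedrichs v₁ w₁ w₂ K k h) :
    IsFriedrichsModel (μ := volume) (w₁ K k : ℂ) (fun q => (√2 : ℂ)⁻¹ * v₁ q)
      (fun q => (w₂ K k q : ℂ)) h := by
  intro f
  obtain ⟨h_fst, h_snd⟩ := hh f
  refine ⟨h_fst.trans ?_, h_snd⟩
  simp only [map_mul, map_inv₀, conj_ofReal, mul_assoc, integral_const_mul]
  rfl

theorem Delta_eq_friedrichsDet (z : ℂ) :
    Delta v₁ w₁ w₂ K k z =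
      friedrichsDet volume (w₁ K k : ℂ) (fun q => (√2 : ℂ)⁻¹ * v₁ q)
        (fun q => (w₂ K k q : ℂ)) z := by
  have h_sqrt : ((√2 : ℂ)⁻¹) ^ 2 = 1 / 2 := by
    rw [inv_pow, ← ofReal_pow, Real.sq_sqrt zero_le_two, ofReal_ofNat, one_div]
  simp only [Delta, friedrichsDet, ← RCLike.conj_mul, map_mul, map_inv₀, conj_ofReal]
  rw [← integral_const_mul, ← h_sqrt]
  congr! 3
  ring

theorem ofReal_mem_bandKk (hw : Continuous (w₂ K k)) (q : Td d) :
    (w₂ K k q : ℂ) ∈ bandKk w₂ K k :=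
  mem_image_of_mem _ ⟨ciInf_le (isCompact_range hw).bddBelow q,
    le_ciSup (isCompact_range hw).bddAbove q⟩

end Torus

/-- For any `K, k ∈ T^d`, a number `z ∈ ℂ \ [E_min(K,k), E_max(K,k)]` is an
eigenvalue of `h(K,k)` if and only if `Δ_K(k; z) = 0`. -/
theorem eigenvalue_iff_Delta_eq_zero
    (d : ℕ) (hd : 1 ≤ d)
    (w₀ v₀ v₁ : Td d → ℝ) (w₁ : Td d → Td d → ℝ) (w₂ : Td d → Td d → Td d → ℝ)
    (hw₀ : Continuous w₀) (hv₀ : Continuous v₀) (hv₁ : Continuous v₁)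
    (hw₁ : Continuous fun x : Td d × Td d => w₁ x.1 x.2)
    (hw₂ : Continuous fun x : Td d × Td d × Td d => w₂ x.1 x.2.1 x.2.2)
    (hsym : ∀ K p q : Td d, w₂ K p q = w₂ K q p)
    (K k : Td d) (h : Hkk d →L[ℂ] Hkk d)
    (hh : IsGenFriedrichs v₁ w₁ w₂ K k h)
    (z : ℂ) (hz : z ∉ bandKk w₂ K k) :
    (∃ f : Hkk d, f ≠ 0 ∧ h f = z • f) ↔ Delta v₁ w₁ w₂ K k z = 0 := by
  have h_ne (q : Td d) : (w₂ K k q : ℂ) ≠ z :=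
    ne_of_mem_of_not_mem (ofReal_mem_bandKk (by fun_prop) q) hz
  rw [Delta_eq_friedrichsDet,
    eigenvalue_iff_Delta_eq_zero_general hh.isFriedrichsModel (.of_forall h_ne),
    and_iff_right (memLp_div_sub_of_continuous (by fun_prop) (by fun_prop) h_ne 2)]
end
end

section
/- For any K, k ∈ T^d, the discrete spectrum of h(K,k) equals the zero set of the Fredholm determinant outside the essential spectrum: σ_disc(h(K,k)) = {z ∈ ℂ \ [E_min(K,k), E_max(K,k)] : Δ_K(k; z) = 0}. -/
open MeasureTheory Complex Filter Topology Set

noncomputable section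

/-- The discrete spectrum of a bounded operator: the set of isolated eigenvalues of finite
multiplicity. -/
def discSpec {H' : Type*} [NormedAddCommGroup H'] [InnerProductSpace ℂ H']
    (A : H' →L[ℂ] H') : Set ℂ :=
  {z | (∃ f, f ≠ 0 ∧ A f = z • f) ∧ z ∉ closure (spectrum ℂ A \ {z}) ∧
       FiniteDimensional ℂ (LinearMap.ker (A - z • (1 : H' →L[ℂ] H')).toLinearMap)}

variable {d : ℕ}

/-!
Off the spectrum of the multiplication operator `T = h₁₁`, Gaussian elimination turns `h f = z f`
into the scalar equation `Δ(z) f₀ = 0`, with the whole eigenvector determined by `f₀`; hence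
eigenvalues are zeros of `Δ` and are simple. The zeros are isolated in the spectrum because they are
real, `Δ'(z) = -1 - ‖(T - z)⁻¹ φ‖² ≠ 0` on the real axis, and `h - z` is invertible where
`Δ(z) ≠ 0`. Conversely no point of `σ(T)` belongs to the discrete spectrum: since the torus has no
isolated points, `σ(T)` is essential spectrum in the sense of Weyl, which survives the finite-rank
coupling and excludes isolated eigenvalues of finite multiplicity of a normal operator.
-/

section EssentialSpectrum

theorem not_finiteDimensional_inf_ker {𝕜 E F : Type*} [DivisionRing 𝕜] [AddCommGroup E]
    [Module 𝕜 E] [AddCommGroup F] [Module 𝕜 F] {W : Submodule 𝕜 E}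
    (hW : ¬ FiniteDimensional 𝕜 W) (D : E →ₗ[𝕜] F) [FiniteDimensional 𝕜 D.range] :
    ¬ FiniteDimensional 𝕜 ↥(W ⊓ D.ker) := fun hfin =>
  have : FiniteDimensional 𝕜 (W.map D) :=
    Submodule.finiteDimensional_of_le (LinearMap.map_le_range (f := D))
  hW <| Module.Finite.iff_fg.2 <| Submodule.fg_of_fg_map_of_fg_inf_ker D
    (Module.Finite.iff_fg.1 this) (Module.Finite.iff_fg.1 hfin)

variable {𝕜 E F : Type*} [NontriviallyNormedField 𝕜] [NormedAddCommGroup E] [NormedSpace 𝕜 E]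
  [NormedAddCommGroup F] [NormedSpace 𝕜 F]

theorem resolvent_apply_eq_iff {T : E →L[𝕜] E} {z : 𝕜} (hz : z ∉ spectrum 𝕜 T) {f g : E} :
    resolvent T z g = f ↔ g = z • f - T f := by
  have hunit : IsUnit (algebraMap 𝕜 (E →L[𝕜] E) z - T) := spectrum.notMem_iff.1 hz
  have hsub (f : E) : (algebraMap 𝕜 (E →L[𝕜] E) z - T) f = z • f - T f := by
    rw [sub_apply, ContinuousLinearMap.algebraMap_apply]
  constructor
  · rintro rfl
    rw [← hsub]
    exact (DFunLike.congr_fun (Ring.mul_inverse_cancel _ hunit) g).symm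
  · rintro rfl
    rw [← hsub]
    exact DFunLike.congr_fun (Ring.inverse_mul_cancel _ hunit) f

/-- The essential spectrum of a bounded operator in the sense of Weyl: the points `z` for which
`A - z` is arbitrarily small on infinite-dimensional subspaces. Subspaces replace the customary
singular sequences so that finite-rank perturbations amount to intersecting with a kernel. -/
def essSpectrum (A : E →L[𝕜] E) : Set 𝕜 :=
  {z | ∀ ε > 0, ∃ W : Submodule 𝕜 E, ¬ FiniteDimensional 𝕜 W ∧ ∀ f ∈ W, ‖A f - z • f‖ ≤ ε * ‖f‖}

theorem notMem_essSpectrum_of_mul_mul_cancel {A B : E →L[𝕜] E} {z : 𝕜}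
    (hB : (A - z • (1 : E →L[𝕜] E)) * B * (A - z • (1 : E →L[𝕜] E)) = A - z • (1 : E →L[𝕜] E))
    [FiniteDimensional 𝕜 (LinearMap.ker (A - z • (1 : E →L[𝕜] E)).toLinearMap)] :
    z ∉ essSpectrum A := by
  intro hz
  set S := A - z • (1 : E →L[𝕜] E)
  set P : E →L[𝕜] E := 1 - B * S
  have hP : LinearMap.range P.toLinearMap ≤ LinearMap.ker S.toLinearMap := by
    rintro _ ⟨f, rfl⟩
    have hSP : S * P = 0 := by rw [mul_sub, mul_one, ← mul_assoc, hB, sub_self]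
    exact DFunLike.congr_fun hSP f
  have : FiniteDimensional 𝕜 (LinearMap.range P.toLinearMap) :=
    Submodule.finiteDimensional_of_le hP
  obtain ⟨W, hW, hbound⟩ := hz (‖B‖ + 1)⁻¹ (by positivity)
  have hne : W ⊓ LinearMap.ker P.toLinearMap ≠ ⊥ := fun h =>
    not_finiteDimensional_inf_ker hW P.toLinearMap (h ▸ inferInstance)
  obtain ⟨f, ⟨hfW, hfP⟩, hf0⟩ := Submodule.exists_mem_ne_zero_of_ne_bot hne
  have hBS : f = B (S f) := sub_eq_zero.1 hfP
  have hlt : ‖f‖ < ‖f‖ := calc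
    ‖f‖ = ‖B (S f)‖ := by rw [← hBS]
    _ ≤ ‖B‖ * ‖S f‖ := B.le_opNorm _
    _ ≤ ‖B‖ * ((‖B‖ + 1)⁻¹ * ‖f‖) := by gcongr; exact hbound f hfW
    _ = ‖B‖ / (‖B‖ + 1) * ‖f‖ := by ring
    _ < ‖f‖ := mul_lt_of_lt_one_left (norm_pos_iff.2 hf0)
      ((div_lt_one (by positivity)).2 (lt_add_one _))
  exact hlt.false

theorem essSpectrum_subset_spectrum (A : E →L[𝕜] E) : essSpectrum A ⊆ spectrum 𝕜 A := by
  intro z hz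
  by_contra hρ
  have hunit : IsUnit (A - z • (1 : E →L[𝕜] E)) := by
    rw [← IsUnit.neg_iff, neg_sub, ← Algebra.algebraMap_eq_smul_one]
    exact spectrum.notMem_iff.1 hρ
  have hker : LinearMap.ker (A - z • (1 : E →L[𝕜] E)).toLinearMap = ⊥ := by
    obtain ⟨B, hB⟩ := hunit.exists_left_inv
    exact LinearMap.ker_eq_bot_of_inverse (g := B.toLinearMap)
      (LinearMap.ext fun f => DFunLike.congr_fun hB f)
  have : FiniteDimensional 𝕜 (LinearMap.ker (A - z • (1 : E →L[𝕜] E)).toLinearMap) :=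
    hker ▸ inferInstance
  obtain ⟨B, hB⟩ := hunit.exists_right_inv
  exact notMem_essSpectrum_of_mul_mul_cancel (by rw [hB, one_mul]) hz

theorem essSpectrum_subset_of_finiteDimensional_range (J : E →ₗᵢ[𝕜] F) (T : E →L[𝕜] E)
    (A : F →L[𝕜] F)
    [FiniteDimensional 𝕜 (LinearMap.range
      (A ∘L J.toContinuousLinearMap - J.toContinuousLinearMap ∘L T).toLinearMap)] :
    essSpectrum T ⊆ essSpectrum A := by
  intro z hz ε hε
  obtain ⟨W, hW, hbound⟩ := hz ε hε
  set D := A ∘L J.toContinuousLinearMap - J.toContinuousLinearMap ∘L T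
  refine ⟨(W ⊓ LinearMap.ker D.toLinearMap).map J.toLinearMap, fun hfin => ?_, ?_⟩
  · exact not_finiteDimensional_inf_ker hW D.toLinearMap
      (Submodule.equivMapOfInjective J.toLinearMap J.injective _).symm.finiteDimensional
  · rintro _ ⟨f, ⟨hfW, hfD⟩, rfl⟩
    have hAJ : A (J f) = J (T f) := sub_eq_zero.1 hfD
    have hJ : A (J f) - z • J f = J (T f - z • f) := by rw [hAJ, map_sub, map_smul]
    change ‖A (J f) - z • J f‖ ≤ ε * ‖J f‖
    rw [hJ, J.norm_map, J.norm_map]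
    exact hbound f hfW

end EssentialSpectrum

section IsolatedPoints

theorem continuousOn_of_diff_singleton {X Y : Type*} [TopologicalSpace X] [T1Space X]
    [TopologicalSpace Y] {f : X → Y} {s : Set X} {x : X} (hf : ContinuousOn f (s \ {x}))
    (hx : x ∉ closure (s \ {x})) : ContinuousOn f s := by
  intro y hy
  rcases eq_or_ne y x with rfl | hyx
  · rw [← continuousWithinAt_sdiff_self, ContinuousWithinAt,
      notMem_closure_iff_nhdsWithin_eq_bot.1 hx]
    exact tendsto_bot
  · exact continuousWithinAt_sdiff_singleton.1 (hf y ⟨hy, hyx⟩)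

variable {H : Type*} [NormedAddCommGroup H] [InnerProductSpace ℂ H] [CompleteSpace H]

theorem disjoint_discSpec_essSpectrum (A : H →L[ℂ] H) [IsStarNormal A] :
    Disjoint (discSpec A) (essSpectrum A) := by
  rw [Set.disjoint_left]
  rintro z ⟨-, hisolated, hker⟩
  have hsub : ContinuousOn (fun x : ℂ => x - z) (spectrum ℂ A) := by fun_prop
  have hinv : ContinuousOn (fun x : ℂ => (x - z)⁻¹) (spectrum ℂ A) :=
    continuousOn_of_diff_singleton
      (ContinuousOn.inv₀ (by fun_prop) fun x hx => sub_ne_zero.2 hx.2) hisolated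
  have hS : A - z • (1 : H →L[ℂ] H) = cfc (fun x : ℂ => x - z) A := by
    rw [cfc_sub (fun x : ℂ => x) (fun _ => z) A, cfc_id' ℂ A, cfc_const z A,
      Algebra.algebraMap_eq_smul_one]
  refine notMem_essSpectrum_of_mul_mul_cancel (B := cfc (fun x : ℂ => (x - z)⁻¹) A) ?_
  rw [hS, ← cfc_mul _ _ A hsub hinv,
    ← cfc_mul (fun x : ℂ => (x - z) * (x - z)⁻¹) _ A (hsub.mul hinv) hsub]
  simp only [mul_inv_mul_cancel]

end IsolatedPoints

section Friedrichs

open scoped InnerProductSpace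

variable {E : Type*} [NormedAddCommGroup E] [InnerProductSpace ℂ E]

/-- The Friedrichs model on `ℂ ⊕ E`: the block operator `[[a, ⟪φ, ·⟫], [φ, T]]`, which couples the
energy level `a` to the operator `T` through the vector `φ`. -/
def friedrichs (a : ℂ) (φ : E) (T : E →L[ℂ] E) : WithLp 2 (ℂ × E) →L[ℂ] WithLp 2 (ℂ × E) :=
  let fst := WithLp.fstL 2 ℂ ℂ E
  let snd := WithLp.sndL 2 ℂ ℂ E
  (WithLp.prodContinuousLinearEquiv 2 ℂ ℂ E).symm.toContinuousLinearMap ∘L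
    (a • fst + innerSL ℂ φ ∘L snd).prod (fst.smulRight φ + T ∘L snd)

variable {a : ℂ} {φ : E} {T : E →L[ℂ] E} {z : ℂ}

@[simp]
theorem friedrichs_apply_fst (x : WithLp 2 (ℂ × E)) :
    (friedrichs a φ T x).fst = a * x.fst + ⟪φ, x.snd⟫_ℂ := rfl

@[simp]
theorem friedrichs_apply_snd (x : WithLp 2 (ℂ × E)) :
    (friedrichs a φ T x).snd = x.fst • φ + T x.snd := rfl

theorem withLp_prod_ext_iff {p : ENNReal} {α β : Type*} {x y : WithLp p (α × β)} :
    x = y ↔ x.fst = y.fst ∧ x.snd = y.snd :=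
  (WithLp.equiv p (α × β)).injective.eq_iff.symm.trans Prod.ext_iff

theorem isSelfAdjoint_friedrichs [CompleteSpace E] (ha : IsSelfAdjoint a) (hT : IsSelfAdjoint T) :
    IsSelfAdjoint (friedrichs a φ T) := by
  rw [ContinuousLinearMap.isSelfAdjoint_iff_isSymmetric] at hT ⊢
  intro x y
  have hTxy : ⟪T x.snd, y.snd⟫_ℂ = ⟪x.snd, T y.snd⟫_ℂ := hT x.snd y.snd
  have ha_conj : starRingEnd ℂ a = a := ha
  simp only [ContinuousLinearMap.coe_coe, WithLp.prod_inner_apply, WithLp.ofLp_fst,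
    WithLp.ofLp_snd, friedrichs_apply_fst, friedrichs_apply_snd, inner_add_left, inner_add_right,
    inner_smul_left, inner_smul_right, hTxy, RCLike.inner_apply, map_add, map_mul, inner_conj_symm,
    ha_conj]
  ring

theorem essSpectrum_subset_essSpectrum_friedrichs :
    essSpectrum T ⊆ essSpectrum (friedrichs a φ T) := by
  let inr : E →ₗᵢ[ℂ] WithLp 2 (ℂ × E) :=
    ⟨(WithLp.prodContinuousLinearEquiv 2 ℂ ℂ E).symm.toLinearMap ∘ₗ LinearMap.inr ℂ ℂ E,
      WithLp.norm_toLp_snd 2 ℂ E⟩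
  set D := friedrichs a φ T ∘L inr.toContinuousLinearMap - inr.toContinuousLinearMap ∘L T
  have hD : LinearMap.range D.toLinearMap ≤ ℂ ∙ WithLp.toLp 2 ((1 : ℂ), (0 : E)) := by
    rintro _ ⟨f, rfl⟩
    refine Submodule.mem_span_singleton.2 ⟨⟪φ, f⟫_ℂ, withLp_prod_ext_iff.2 ⟨?_, ?_⟩⟩
    · simp [D, inr]
    · simp [D, inr]
  have : FiniteDimensional ℂ (LinearMap.range D.toLinearMap) :=
    Submodule.finiteDimensional_of_le hD
  exact essSpectrum_subset_of_finiteDimensional_range inr T (friedrichs a φ T)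

/-- The Fredholm determinant `Δ(z) = a - z - ⟪φ, (T - z)⁻¹ φ⟫` of the Friedrichs model, the Schur
complement of `T - z`. The sign differs because Mathlib's `resolvent T z` is `(z - T)⁻¹`; it is
meaningful only for `z ∉ spectrum ℂ T`, the resolvent being `0` elsewhere. -/
def fredholmDet (a : ℂ) (φ : E) (T : E →L[ℂ] E) (z : ℂ) : ℂ :=
  a - z + ⟪φ, resolvent T z φ⟫_ℂ

/-- Gaussian elimination of the second component. -/
theorem smul_sub_friedrichs_apply_eq_iff (hz : z ∉ spectrum ℂ T) {x y : WithLp 2 (ℂ × E)} :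
    z • x - friedrichs a φ T x = y ↔
      -(fredholmDet a φ T z * x.fst) = y.fst + ⟪φ, resolvent T z y.snd⟫_ℂ ∧
        x.snd = resolvent T z (y.snd + x.fst • φ) := by
  have hsnd : z • x.snd - (x.fst • φ + T x.snd) = y.snd ↔
      x.snd = resolvent T z (y.snd + x.fst • φ) := by
    rw [eq_comm (a := x.snd), resolvent_apply_eq_iff hz, ← sub_sub, sub_right_comm,
      sub_eq_iff_eq_add, eq_comm]
  simp only [withLp_prod_ext_iff, WithLp.sub_fst, WithLp.sub_snd, WithLp.smul_fst, WithLp.smul_snd,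
    friedrichs_apply_fst, friedrichs_apply_snd, smul_eq_mul, hsnd]
  refine and_congr_left fun hx => ?_
  have hinner : ⟪φ, x.snd⟫_ℂ = ⟪φ, resolvent T z y.snd⟫_ℂ + x.fst * ⟪φ, resolvent T z φ⟫_ℂ := by
    rw [hx, map_add, map_smul, inner_add_right, inner_smul_right]
  rw [hinner, fredholmDet]
  constructor <;> intro h <;> linear_combination h

theorem friedrichs_apply_eq_smul_iff (hz : z ∉ spectrum ℂ T) {x : WithLp 2 (ℂ × E)} :
    friedrichs a φ T x = z • x ↔
      fredholmDet a φ T z * x.fst = 0 ∧ x.snd = x.fst • resolvent T z φ := by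
  rw [eq_comm, ← sub_eq_zero, smul_sub_friedrichs_apply_eq_iff hz]
  simp

theorem notMem_spectrum_friedrichs [CompleteSpace E] (hz : z ∉ spectrum ℂ T)
    (hdet : fredholmDet a φ T z ≠ 0) : z ∉ spectrum ℂ (friedrichs a φ T) := by
  rw [spectrum.notMem_iff, ContinuousLinearMap.isUnit_iff_bijective,
    Function.bijective_iff_existsUnique]
  intro y
  let c : ℂ := -((fredholmDet a φ T z)⁻¹ * (y.fst + ⟪φ, resolvent T z y.snd⟫_ℂ))
  have hc (x₀ : ℂ) : -(fredholmDet a φ T z * x₀) = y.fst + ⟪φ, resolvent T z y.snd⟫_ℂ ↔ x₀ = c := by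
    rw [neg_eq_iff_eq_neg, ← eq_inv_mul_iff_mul_eq₀ hdet, mul_neg]
  refine ⟨WithLp.toLp 2 (c, resolvent T z (y.snd + c • φ)),
    (smul_sub_friedrichs_apply_eq_iff hz).2 ⟨(hc c).2 rfl, rfl⟩, fun x hx => ?_⟩
  obtain ⟨hfst, hsnd⟩ := (smul_sub_friedrichs_apply_eq_iff hz).1 hx
  rw [hc] at hfst
  exact withLp_prod_ext_iff.2 ⟨hfst, hfst ▸ hsnd⟩

theorem exists_friedrichs_eigenvector_iff (hz : z ∉ spectrum ℂ T) :
    (∃ x, x ≠ 0 ∧ friedrichs a φ T x = z • x) ↔ fredholmDet a φ T z = 0 := by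
  constructor
  · rintro ⟨x, hx0, hx⟩
    obtain ⟨hdet, hsnd⟩ := (friedrichs_apply_eq_smul_iff hz).1 hx
    refine (mul_eq_zero.1 hdet).resolve_right fun hfst => hx0 ?_
    exact withLp_prod_ext_iff.2 ⟨hfst, by rw [hsnd, hfst, zero_smul, WithLp.zero_snd]⟩
  · intro hdet
    refine ⟨WithLp.toLp 2 (1, resolvent T z φ), fun h => ?_, ?_⟩
    · exact one_ne_zero (congrArg WithLp.fst h)
    · rw [friedrichs_apply_eq_smul_iff hz, hdet]
      simp

theorem finiteDimensional_ker_friedrichs_sub_smul (hz : z ∉ spectrum ℂ T) :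
    FiniteDimensional ℂ (LinearMap.ker
      (friedrichs a φ T - z • (1 : WithLp 2 (ℂ × E) →L[ℂ] WithLp 2 (ℂ × E))).toLinearMap) := by
  refine FiniteDimensional.of_injective ((WithLp.fstₗ 2 ℂ ℂ E).domRestrict _) ?_
  rw [injective_iff_map_eq_zero]
  rintro ⟨x, hx⟩ hfst
  have hfst : x.fst = 0 := hfst
  have heigen : friedrichs a φ T x = z • x := sub_eq_zero.1 hx
  have hsnd := ((friedrichs_apply_eq_smul_iff hz).1 heigen).2
  rw [hfst, zero_smul] at hsnd
  exact Subtype.ext (withLp_prod_ext_iff.2 ⟨hfst, hsnd⟩)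

variable [CompleteSpace E]

theorem hasDerivAt_fredholmDet (hz : z ∉ spectrum ℂ T) :
    HasDerivAt (fredholmDet a φ T) (-1 - ⟪φ, resolvent T z (resolvent T z φ)⟫_ℂ) z := by
  have hres : HasDerivAt (resolvent T) (-resolvent T z ^ 2) z :=
    spectrum.hasDerivAt_resolvent_const_left (spectrum.notMem_iff.1 hz)
  have hinner : HasDerivAt (fun w => ⟪φ, resolvent T w φ⟫_ℂ)
      (-⟪φ, resolvent T z (resolvent T z φ)⟫_ℂ) z := by
    refine ((innerSL ℂ φ ∘L ContinuousLinearMap.apply ℂ E φ).hasFDerivAt.comp_hasDerivAt z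
      hres).congr_deriv ?_
    rw [map_neg, sq]
    rfl
  exact (((hasDerivAt_id z).const_sub a).add hinner).congr_deriv (sub_eq_add_neg _ _).symm

/-- On the real axis `(T - z)⁻¹` is self-adjoint, so `Δ'(z) = -1 - ‖(T - z)⁻¹ φ‖² < 0`. -/
theorem fredholmDet_deriv_ne_zero (hT : IsSelfAdjoint T) (hz : IsSelfAdjoint z) :
    -1 - ⟪φ, resolvent T z (resolvent T z φ)⟫_ℂ ≠ 0 := by
  have hres : IsSelfAdjoint (resolvent T z) :=
    ((IsSelfAdjoint.algebraMap (E →L[ℂ] E) hz).sub hT).ringInverse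
  have hinner : ⟪φ, resolvent T z (resolvent T z φ)⟫_ℂ = (‖resolvent T z φ‖ : ℂ) ^ 2 := by
    have hsymm := ContinuousLinearMap.isSelfAdjoint_iff_isSymmetric.1 hres
    exact (hsymm φ (resolvent T z φ)).symm.trans (inner_self_eq_norm_sq_to_K _)
  have hneg : -1 - ‖resolvent T z φ‖ ^ 2 < 0 := by linarith [sq_nonneg ‖resolvent T z φ‖]
  rw [hinner]
  exact_mod_cast hneg.ne

theorem notMem_closure_spectrum_friedrichs_diff_singleton (ha : IsSelfAdjoint a)
    (hT : IsSelfAdjoint T) (hz : z ∉ spectrum ℂ T) (hdet : fredholmDet a φ T z = 0) :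
    z ∉ closure (spectrum ℂ (friedrichs a φ T) \ {z}) := by
  have hz_real : IsSelfAdjoint z := by
    obtain ⟨x, hx0, hx⟩ := (exists_friedrichs_eigenvector_iff hz).2 hdet
    have hsymm := ContinuousLinearMap.isSelfAdjoint_iff_isSymmetric.1
      (isSelfAdjoint_friedrichs (φ := φ) ha hT)
    exact hsymm.conj_eigenvalue_eq_self
      (Module.End.hasEigenvalue_of_hasEigenvector ⟨Module.End.mem_eigenspace_iff.2 hx, hx0⟩)
  have hdet_ne : ∀ᶠ w in 𝓝[≠] z, fredholmDet a φ T w ≠ 0 :=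
    (hasDerivAt_fredholmDet hz).eventually_ne (fredholmDet_deriv_ne_zero hT hz_real)
  have hT_notMem : ∀ᶠ w in 𝓝[≠] z, w ∉ spectrum ℂ T :=
    nhdsWithin_le_nhds ((spectrum.isClosed T).isOpen_compl.eventually_mem hz)
  rw [mem_closure_iff_frequently, not_frequently]
  filter_upwards [eventually_nhdsWithin_iff.1 (hdet_ne.and hT_notMem)] with w hw hmem
  exact notMem_spectrum_friedrichs (hw hmem.2).2 (hw hmem.2).1 hmem.1

theorem discSpec_friedrichs (ha : IsSelfAdjoint a) (hT : IsSelfAdjoint T)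
    (hess : spectrum ℂ T ⊆ essSpectrum T) :
    discSpec (friedrichs a φ T) = {z | z ∉ spectrum ℂ T ∧ fredholmDet a φ T z = 0} := by
  have hA : IsSelfAdjoint (friedrichs a φ T) := isSelfAdjoint_friedrichs ha hT
  have : IsStarNormal (friedrichs a φ T) := hA.isStarNormal
  ext z
  constructor
  · intro hz
    have hzT : z ∉ spectrum ℂ T := fun h => Set.disjoint_left.1
      (disjoint_discSpec_essSpectrum (friedrichs a φ T)) hz
      (essSpectrum_subset_essSpectrum_friedrichs (hess h))
    exact ⟨hzT, (exists_friedrichs_eigenvector_iff hzT).1 hz.1⟩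
  · rintro ⟨hzT, hdet⟩
    exact ⟨(exists_friedrichs_eigenvector_iff hzT).2 hdet,
      notMem_closure_spectrum_friedrichs_diff_singleton ha hT hzT hdet,
      finiteDimensional_ker_friedrichs_sub_smul hzT⟩

end Friedrichs

section Multiplication

open scoped ENNReal InnerProductSpace

variable {X : Type*} [MeasurableSpace X] {μ : Measure X} {𝕜 : Type*} [RCLike 𝕜]

theorem linearIndependent_indicatorConstLp_one {ι : Type*} {s : ι → Set X}
    (hs : ∀ i, MeasurableSet (s i)) (hfin : ∀ i, μ (s i) ≠ ∞) (hpos : ∀ i, μ (s i) ≠ 0)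
    (hdisj : Pairwise (Function.onFun Disjoint s)) :
    LinearIndependent 𝕜 fun i => indicatorConstLp 2 (hs i) (hfin i) (1 : 𝕜) := by
  refine linearIndependent_of_ne_zero_of_inner_eq_zero (fun i hi => ?_) fun i j hij => ?_
  · have hinner := L2.inner_indicatorConstLp_one_indicatorConstLp_one (𝕜 := 𝕜) (hs i) (hs i)
      (hfin i) (hfin i)
    rw [hi, inner_zero_left, Set.inter_self, eq_comm, RCLike.ofReal_eq_zero,
      measureReal_eq_zero_iff (hfin i)] at hinner
    exact hpos i hinner
  · have hinner := L2.inner_indicatorConstLp_one_indicatorConstLp_one (𝕜 := 𝕜) (hs i) (hs j)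
      (hfin i) (hfin j)
    rwa [(hdisj hij).inter_eq, measureReal_empty, RCLike.ofReal_zero] at hinner

theorem mem_ker_LpToLpRestrictCLM_compl {F : Type*} [NormedAddCommGroup F] [NormedSpace 𝕜 F]
    {p : ℝ≥0∞} [Fact (1 ≤ p)] {U : Set X} (hU : MeasurableSet U) {f : Lp F p μ} :
    f ∈ LinearMap.ker (LpToLpRestrictCLM X F 𝕜 μ p Uᶜ).toLinearMap ↔
      ∀ᵐ x ∂μ, x ∉ U → f x = 0 := by
  rw [LinearMap.mem_ker, ContinuousLinearMap.coe_coe, Lp.eq_zero_iff_ae_eq_zero,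
    (LpToLpRestrictCLM_coeFn 𝕜 Uᶜ f).congr_left, EventuallyEq, ae_restrict_iff' hU.compl]
  rfl

variable [TopologicalSpace X]

theorem not_finiteDimensional_ker_LpToLpRestrictCLM_compl [OpensMeasurableSpace X] [T2Space X]
    [PerfectSpace X] [IsFiniteMeasure μ] [μ.IsOpenPosMeasure] {U : Set X} (hU : IsOpen U)
    (hne : U.Nonempty) :
    ¬ FiniteDimensional 𝕜 (LinearMap.ker (LpToLpRestrictCLM X 𝕜 𝕜 μ 2 Uᶜ).toLinearMap) := by
  obtain ⟨x, hx⟩ := hne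
  have : Infinite U := (infinite_of_mem_nhds x (hU.mem_nhds hx)).to_subtype
  obtain ⟨V, hVinf, hVopen, hVdisj⟩ := exists_seq_infinite_isOpen_pairwise_disjoint U
  let W (n : ℕ) : Set X := Subtype.val '' V n
  have hW (n : ℕ) : IsOpen (W n) := hU.isOpenMap_subtype_val _ (hVopen n)
  have hWdisj : Pairwise (Function.onFun Disjoint W) := fun i j hij =>
    (Set.disjoint_image_iff Subtype.val_injective).2 (hVdisj hij)
  have hli := linearIndependent_indicatorConstLp_one (𝕜 := 𝕜) (μ := μ)
    (fun n => (hW n).measurableSet) (fun n => measure_ne_top μ (W n))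
    (fun n => (hW n).measure_ne_zero μ ((hVinf n).nonempty.image _)) hWdisj
  have hmem (n : ℕ) : indicatorConstLp 2 (hW n).measurableSet (measure_ne_top μ (W n)) (1 : 𝕜) ∈
      LinearMap.ker (LpToLpRestrictCLM X 𝕜 𝕜 μ 2 Uᶜ).toLinearMap := by
    rw [mem_ker_LpToLpRestrictCLM_compl hU.measurableSet]
    filter_upwards [indicatorConstLp_coeFn_notMem (p := 2) (hs := (hW n).measurableSet)
      (hμs := measure_ne_top μ (W n)) (c := (1 : 𝕜))] with y hy hyU
    exact hy fun hyW => hyU (Subtype.coe_image_subset U (V n) hyW)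
  intro hfin
  exact not_finite_iff_infinite.2 inferInstance
    (LinearIndependent.of_comp (Submodule.subtype _)
      (v := fun n => (⟨_, hmem n⟩ : LinearMap.ker _)) hli).finite

variable [CompactSpace X] [BorelSpace X] [IsFiniteMeasure μ]

/-- The operators of multiplication by continuous functions on `L²(μ)`, depending linearly on the
function; `mulL2` bundles them into a representation. -/
def mulL2Linear (μ : Measure X) [IsFiniteMeasure μ] :
    C(X, ℂ) →ₗ[ℂ] (Lp ℂ 2 μ →L[ℂ] Lp ℂ 2 μ) :=
  ((ContinuousLinearMap.mul ℂ ℂ).holderL μ ∞ 2 2 ∘L ContinuousMap.toLp ∞ μ ℂ).toLinearMap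

theorem coeFn_mulL2Linear (m : C(X, ℂ)) (f : Lp ℂ 2 μ) :
    mulL2Linear μ m f =ᵐ[μ] fun x => m x * f x := by
  filter_upwards [(ContinuousLinearMap.mul ℂ ℂ).coeFn_holder (r := 2)
    (ContinuousMap.toLp ∞ μ ℂ m) f, ContinuousMap.coeFn_toLp (p := ∞) (𝕜 := ℂ) μ m] with x hx hm
  exact hx.trans (by rw [hm, ContinuousLinearMap.mul_apply'])

theorem mulL2Linear_one : mulL2Linear μ 1 = 1 := by
  refine ContinuousLinearMap.ext fun f => Lp.ext ?_
  filter_upwards [coeFn_mulL2Linear 1 f] with x hx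
  rw [hx, ContinuousMap.one_apply, one_mul, one_apply_eq_self]

theorem mulL2Linear_mul (m n : C(X, ℂ)) :
    mulL2Linear μ (m * n) = mulL2Linear μ m * mulL2Linear μ n := by
  refine ContinuousLinearMap.ext fun f => Lp.ext ?_
  filter_upwards [coeFn_mulL2Linear (m * n) f, coeFn_mulL2Linear n f,
    coeFn_mulL2Linear m (mulL2Linear μ n f)] with x hmn hn hm
  rw [hmn, mul_apply_eq_comp, hm, hn, ContinuousMap.mul_apply, mul_assoc]

theorem mulL2Linear_star (m : C(X, ℂ)) : mulL2Linear μ (star m) = star (mulL2Linear μ m) := by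
  refine (ContinuousLinearMap.eq_adjoint_iff _ _).2 fun f g => ?_
  rw [L2.inner_def, L2.inner_def]
  refine integral_congr_ae ?_
  filter_upwards [coeFn_mulL2Linear (star m) f, coeFn_mulL2Linear m g] with x hf hg
  simp only [hf, hg, RCLike.inner_apply, ContinuousMap.star_apply, map_mul, RCLike.star_def,
    RCLike.conj_conj]
  ring

/-- The representation of the C⋆-algebra `C(X, ℂ)` on `L²(μ)` by multiplication operators. -/
def mulL2 (μ : Measure X) [IsFiniteMeasure μ] :
    C(X, ℂ) →⋆ₐ[ℂ] (Lp ℂ 2 μ →L[ℂ] Lp ℂ 2 μ) where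
  toAlgHom := AlgHom.ofLinearMap (mulL2Linear μ) mulL2Linear_one mulL2Linear_mul
  map_star' := mulL2Linear_star

theorem coeFn_mulL2 (m : C(X, ℂ)) (f : Lp ℂ 2 μ) : mulL2 μ m f =ᵐ[μ] fun x => m x * f x :=
  coeFn_mulL2Linear m f

theorem coeFn_mulL2_sub_smul (m : C(X, ℂ)) (z : ℂ) (f : Lp ℂ 2 μ) :
    mulL2 μ m f - z • f =ᵐ[μ] fun x => (m x - z) * f x := by
  filter_upwards [coeFn_mulL2 m f, Lp.coeFn_sub (mulL2 μ m f) (z • f), Lp.coeFn_smul z f]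
    with x hm hsub hsmul
  rw [hsub, Pi.sub_apply, hsmul, Pi.smul_apply, hm, smul_eq_mul, sub_mul]

theorem spectrum_mulL2_subset_range (m : C(X, ℂ)) :
    spectrum ℂ (mulL2 μ m) ⊆ Set.range m :=
  (AlgHom.spectrum_apply_subset (mulL2 μ) m).trans (ContinuousMap.spectrum_eq_range m).subset

/-- The subspaces needed at `m x₀` are the functions supported where `‖m - m x₀‖ < ε`. -/
theorem range_subset_essSpectrum_mulL2 [T2Space X] [PerfectSpace X] [μ.IsOpenPosMeasure]
    (m : C(X, ℂ)) : Set.range m ⊆ essSpectrum (mulL2 μ m) := by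
  rintro _ ⟨x₀, rfl⟩ ε hε
  let U : Set X := {x | ‖m x - m x₀‖ < ε}
  have hU : IsOpen U := isOpen_lt (by fun_prop) continuous_const
  have hx₀ : x₀ ∈ U := by rwa [Set.mem_ofPred_eq, sub_self, norm_zero]
  refine ⟨_, not_finiteDimensional_ker_LpToLpRestrictCLM_compl (𝕜 := ℂ) (μ := μ) hU ⟨x₀, hx₀⟩,
    fun f hf => Lp.norm_le_mul_norm_of_ae_le_mul ?_⟩
  filter_upwards [(mem_ker_LpToLpRestrictCLM_compl hU.measurableSet).1 hf,
    coeFn_mulL2_sub_smul m (m x₀) f] with x hx hsub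
  rw [hsub, norm_mul]
  by_cases hxU : x ∈ U
  · exact mul_le_mul_of_nonneg_right (le_of_lt hxU) (norm_nonneg _)
  · rw [hx hxU, norm_zero, mul_zero, mul_zero]

theorem spectrum_mulL2 [T2Space X] [PerfectSpace X] [μ.IsOpenPosMeasure] (m : C(X, ℂ)) :
    spectrum ℂ (mulL2 μ m) = Set.range m :=
  (spectrum_mulL2_subset_range m).antisymm
    ((range_subset_essSpectrum_mulL2 m).trans (essSpectrum_subset_spectrum _))

theorem coeFn_resolvent_mulL2 {m : C(X, ℂ)} {z : ℂ} (hz : z ∉ Set.range m) (f : Lp ℂ 2 μ) :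
    resolvent (mulL2 μ m) z f =ᵐ[μ] fun x => (z - m x)⁻¹ * f x := by
  set g := resolvent (mulL2 μ m) z f
  have hres : f = z • g - mulL2 μ m g :=
    (resolvent_apply_eq_iff fun h => hz (spectrum_mulL2_subset_range m h)).1 rfl
  have hf : -f = mulL2 μ m g - z • g := by rw [hres, neg_sub]
  filter_upwards [coeFn_mulL2_sub_smul m z g, Lp.coeFn_neg f] with x hg hneg
  have hne : z - m x ≠ 0 := sub_ne_zero.2 fun h => hz ⟨x, h.symm⟩
  rw [eq_inv_mul_iff_mul_eq₀ hne]
  rw [← hf, hneg, Pi.neg_apply] at hg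
  linear_combination hg

theorem fredholmDet_mulL2 {a z : ℂ} {φ : Lp ℂ 2 μ} {m : C(X, ℂ)} (hz : z ∉ Set.range m) :
    fredholmDet a φ (mulL2 μ m) z = a - z - ∫ x, (‖φ x‖ : ℂ) ^ 2 / (m x - z) ∂μ := by
  have hinner : ⟪φ, resolvent (mulL2 μ m) z φ⟫_ℂ = -∫ x, (‖φ x‖ : ℂ) ^ 2 / (m x - z) ∂μ := by
    rw [L2.inner_def, ← integral_neg]
    refine integral_congr_ae ?_
    filter_upwards [coeFn_resolvent_mulL2 hz φ] with x hx
    rw [hx, RCLike.inner_apply, mul_assoc, RCLike.mul_conj, ← neg_sub (m x) z, inv_neg, neg_mul,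
      div_eq_inv_mul]
    rfl
  rw [fredholmDet, hinner, ← sub_eq_add_neg]

end Multiplication

section General

variable {X : Type*} [MeasurableSpace X] [TopologicalSpace X] [CompactSpace X] [T2Space X]
  [PerfectSpace X] [BorelSpace X] {μ : Measure X} [IsFiniteMeasure μ] [μ.IsOpenPosMeasure]

theorem discSpec_genFriedrichs_general {a : ℂ} (ha : IsSelfAdjoint a) (φ : Lp ℂ 2 μ) {m : C(X, ℂ)}
    (hm : IsSelfAdjoint m) :
    discSpec (friedrichs a φ (mulL2 μ m)) =
      {z | z ∉ Set.range m ∧ a - z - ∫ x, (‖φ x‖ : ℂ) ^ 2 / (m x - z) ∂μ = 0} := by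
  have hess : spectrum ℂ (mulL2 μ m) ⊆ essSpectrum (mulL2 μ m) :=
    (spectrum_mulL2 m).subset.trans (range_subset_essSpectrum_mulL2 m)
  rw [discSpec_friedrichs ha (hm.map (mulL2 μ)) hess, spectrum_mulL2]
  ext z
  exact and_congr_right fun hz => by rw [fredholmDet_mulL2 hz]

end General

section Torus

theorem nontrivial_addCircle (p : ℝ) [hp : Fact (0 < p)] : Nontrivial (AddCircle p) :=
  have : Infinite (Set.Ico 0 (0 + p)) := (Set.Ico_infinite (by linarith [hp.out])).to_subtype
  (AddCircle.equivIco p 0).nontrivial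

theorem nontrivial_td (hd : 1 ≤ d) : Nontrivial (Td d) := by
  have := nontrivial_addCircle (2 * Real.pi)
  have : Nonempty (Fin d) := ⟨⟨0, hd⟩⟩
  infer_instance

theorem bandKk_eq_range {w₂ : Td d → Td d → Td d → ℝ} {K k : Td d} (hw : Continuous (w₂ K k)) :
    bandKk w₂ K k = Set.range fun q => (w₂ K k q : ℂ) := by
  have hIcc : Set.range (w₂ K k) = Set.Icc (Emin w₂ K k) (Emax w₂ K k) :=
    eq_Icc_of_connected_compact (isConnected_range hw) (isCompact_range hw)
  rw [bandKk, ← hIcc, ← Set.range_comp]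
  rfl

/-- The form factor `v₁ / √2` of `h(K, k)` as an element of `L²(T^d)`. -/
def formFactor {v : Td d → ℝ} (hv : Continuous v) : L2 d :=
  ContinuousMap.toLp 2 volume ℂ ⟨fun q => (Real.sqrt 2 : ℂ)⁻¹ * (v q : ℂ), by fun_prop⟩

theorem coeFn_formFactor {v : Td d → ℝ} (hv : Continuous v) :
    formFactor hv =ᵐ[volume] fun q => (Real.sqrt 2 : ℂ)⁻¹ * (v q : ℂ) :=
  ContinuousMap.coeFn_toLp (p := 2) (𝕜 := ℂ) volume _

theorem norm_formFactor_sq {v : Td d → ℝ} (hv : Continuous v) :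
    ∀ᵐ q, (‖formFactor hv q‖ : ℂ) ^ 2 = 1 / 2 * (v q : ℂ) ^ 2 := by
  filter_upwards [coeFn_formFactor hv] with q hq
  rw [hq, norm_mul, norm_inv, norm_real, norm_real, Real.norm_of_nonneg (Real.sqrt_nonneg 2),
    Real.norm_eq_abs, ← ofReal_pow, mul_pow, inv_pow, sq_abs, Real.sq_sqrt zero_le_two]
  push_cast
  ring

/-- The symbol `w₂(K; k, ·)` of the entry `h₁₁(K, k)`. -/
def symbol {w : Td d → ℝ} (hw : Continuous w) : C(Td d, ℂ) :=
  ⟨fun q => (w q : ℂ), by fun_prop⟩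

theorem isSelfAdjoint_symbol {w : Td d → ℝ} (hw : Continuous w) : IsSelfAdjoint (symbol hw) :=
  ContinuousMap.ext fun _ => conj_ofReal _

variable {v₁ : Td d → ℝ} {w₁ : Td d → Td d → ℝ} {w₂ : Td d → Td d → Td d → ℝ} {K k : Td d}

theorem IsGenFriedrichs.eq_friedrichs {h : Hkk d →L[ℂ] Hkk d}
    (hh : IsGenFriedrichs v₁ w₁ w₂ K k h) (hv₁ : Continuous v₁) (hw₂ : Continuous (w₂ K k)) :
    h = friedrichs (w₁ K k : ℂ) (formFactor hv₁) (mulL2 volume (symbol hw₂)) := by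
  ext1 f
  obtain ⟨hfst, hsnd⟩ := hh f
  refine withLp_prod_ext_iff.2 ⟨hfst.trans ?_, Lp.ext (hsnd.trans ?_)⟩
  · rw [friedrichs_apply_fst, L2.inner_def, ← integral_const_mul]
    refine congrArg _ (integral_congr_ae ?_)
    filter_upwards [coeFn_formFactor hv₁] with q hq
    rw [hq, RCLike.inner_apply, map_mul, map_inv₀, conj_ofReal, conj_ofReal, ← mul_assoc]
    exact mul_comm _ _
  · rw [friedrichs_apply_snd]
    filter_upwards [coeFn_formFactor hv₁, coeFn_mulL2 (symbol hw₂) f.snd,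
      Lp.coeFn_smul f.fst (formFactor hv₁),
      Lp.coeFn_add (f.fst • formFactor hv₁) (mulL2 volume (symbol hw₂) f.snd)]
      with q hφ hmul hsmul hadd
    rw [hadd, Pi.add_apply, hsmul, Pi.smul_apply, hφ, hmul, smul_eq_mul, mul_comm f.fst]
    rfl

theorem delta_eq_integral_norm_formFactor (hv₁ : Continuous v₁) (z : ℂ) :
    Delta v₁ w₁ w₂ K k z =
      w₁ K k - z - ∫ q, (‖formFactor hv₁ q‖ : ℂ) ^ 2 / ((w₂ K k q : ℂ) - z) := by
  rw [Delta, ← integral_const_mul]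
  refine congrArg _ (integral_congr_ae ?_)
  filter_upwards [norm_formFactor_sq hv₁] with q hq
  rw [hq, mul_div_assoc]

end Torus

/-- For any `K, k ∈ T^d`, the discrete spectrum of `h(K,k)` equals the zero
set of the Fredholm determinant outside the essential spectrum. -/
theorem discSpec_genFriedrichs
    (d : ℕ) (hd : 1 ≤ d)
    (w₀ v₀ v₁ : Td d → ℝ) (w₁ : Td d → Td d → ℝ) (w₂ : Td d → Td d → Td d → ℝ)
    (hw₀ : Continuous w₀) (hv₀ : Continuous v₀) (hv₁ : Continuous v₁)
    (hw₁ : Continuous fun x : Td d × Td d => w₁ x.1 x.2)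
    (hw₂ : Continuous fun x : Td d × Td d × Td d => w₂ x.1 x.2.1 x.2.2)
    (hsym : ∀ K p q : Td d, w₂ K p q = w₂ K q p)
    (K k : Td d) (h : Hkk d →L[ℂ] Hkk d)
    (hh : IsGenFriedrichs v₁ w₁ w₂ K k h) :
    discSpec h = {z : ℂ | z ∉ bandKk w₂ K k ∧ Delta v₁ w₁ w₂ K k z = 0} := by
  have := nontrivial_td hd
  have hw : Continuous (w₂ K k) := hw₂.comp (by fun_prop : Continuous fun q : Td d => (K, k, q))
  simp only [bandKk_eq_range hw, delta_eq_integral_norm_formFactor hv₁]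
  rw [hh.eq_friedrichs hv₁ hw]
  exact discSpec_genFriedrichs_general (conj_ofReal _) _ (isSelfAdjoint_symbol hw)
end
end

section
/- For every K ∈ T^d and every z ∈ ℂ \ Σ_K, the operator T_11(K, z) is a Hilbert–Schmidt integral operator on L²(T^d) and the 2×2 block operator matrix T(K, z) is a compact operator on ℂ ⊕ L²(T^d). -/
open MeasureTheory Complex Filter Topology Set

noncomputable section

variable {d : ℕ}

/-- The defining equations of the `2×2` block operator matrix `T(K, z)` acting on
`ℂ ⊕ L²(T^d)`:
`(T g)₀ = (1 + w₀(K) − z) g₀ + ∫ v₀(t) g₁(t) dt`,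
`(T g)₁(p) = −v₀(p) g₀ / Δ_K(p; z) + (v₁(p)/(2Δ_K(p; z))) ∫ v₁(t) g₁(t)/(w₂(K;p,t) − z) dt`. -/
def IsTOp {d : ℕ} (w₀ v₀ v₁ : Td d → ℝ) (w₁ : Td d → Td d → ℝ)
    (w₂ : Td d → Td d → Td d → ℝ) (K : Td d) (z : ℂ) (T : Hkk d →L[ℂ] Hkk d) : Prop :=
  ∀ g : Hkk d,
    (pk1 (T g) = (1 + (w₀ K : ℂ) - z) * pk1 g + (∫ t, (v₀ t : ℂ) * (pk2 g) t)) ∧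
    (⇑(pk2 (T g)) =ᵐ[volume] fun p =>
        -((v₀ p : ℂ) * pk1 g) / Delta v₁ w₁ w₂ K p z +
          (v₁ p : ℂ) / (2 * Delta v₁ w₁ w₂ K p z) *
            (∫ t, (v₁ t : ℂ) * (pk2 g) t / ((w₂ K p t : ℂ) - z)))

/-! Since `ℂ` is finite dimensional, `T(K, z)` is compact as soon as its block `T₁₁(K, z)` is. For
`z ∉ Σ_K` the functions `Δ_K(·; z)` and `w₂(K; ·, ·) - z` are continuous without zeros, so the
kernel of `T₁₁(K, z)` is continuous on a compact space: it is square integrable, and by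
Arzelà–Ascoli it defines a compact operator. -/

/-- A norm-continuous family of operators on a compact space is equicontinuous on the unit ball, so
the Arzelà–Ascoli theorem applies to the functions `x ↦ L x g` with `‖g‖ ≤ 1`. -/
theorem isCompactOperator_eval_family {𝕜 X H F : Type*} [NontriviallyNormedField 𝕜]
    [TopologicalSpace X] [CompactSpace X]
    [SeminormedAddCommGroup H] [NormedSpace 𝕜 H] [NormedAddCommGroup F] [NormedSpace 𝕜 F]
    [ProperSpace F] (L : C(X, H →L[𝕜] F)) :
    IsCompactOperator fun g : H => (⟨fun x => L x g, by fun_prop⟩ : C(X, F)) := by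
  let e := ContinuousMap.isometryEquivBoundedOfCompact X F
  let S : H → BoundedContinuousFunction X F := fun g => e ⟨fun x => L x g, by fun_prop⟩
  suffices hS : IsCompactOperator S from hS.continuous_comp e.symm.continuous
  have maps_to_ball : ∀ (f : BoundedContinuousFunction X F) (x : X),
      f ∈ S '' Metric.closedBall 0 1 → f x ∈ Metric.closedBall 0 ‖L‖ := by
    rintro _ x ⟨g, hg, rfl⟩
    rw [mem_closedBall_zero_iff] at hg ⊢
    exact ((L x).unit_le_opNorm g hg).trans (L.norm_coe_le_norm x)
  have equicontinuous : Equicontinuous ((↑) : S '' Metric.closedBall 0 1 → X → F) := by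
    intro x₀
    refine Metric.equicontinuousAt_of_continuity_modulus (fun x => dist (L x₀) (L x)) ?_ _ ?_
    · simpa only [dist_self] using
        (continuous_const.dist L.continuous : Continuous fun x => dist (L x₀) (L x)).tendsto x₀
    · refine Eventually.of_forall ?_
      rintro x ⟨_, g, hg, rfl⟩
      rw [dist_eq_norm (L x₀)]
      exact (dist_eq_norm _ _).trans_le
        ((L x₀ - L x).unit_le_opNorm g (mem_closedBall_zero_iff.1 hg))
  exact ⟨_, BoundedContinuousFunction.arzela_ascoli _ (isCompact_closedBall _ _) _
      maps_to_ball equicontinuous,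
    mem_of_superset (Metric.closedBall_mem_nhds 0 one_pos)
      fun g hg => subset_closure (mem_image_of_mem S hg)⟩

theorem isCompactOperator_prodMk {M M₁ M₂ : Type*} [TopologicalSpace M] [Zero M]
    [TopologicalSpace M₁] [TopologicalSpace M₂] {f : M → M₁} {g : M → M₂}
    (hf : IsCompactOperator f) (hg : IsCompactOperator g) :
    IsCompactOperator fun x => (f x, g x) := by
  obtain ⟨A, hA, hfA⟩ := hf
  obtain ⟨B, hB, hgB⟩ := hg
  exact ⟨A ×ˢ B, hA.prod hB, inter_mem hfA hgB⟩

theorem isCompactOperator_withLp_of_corner {𝕜 E F E' F' : Type*} [Semiring 𝕜] {p q : ENNReal}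
    [AddCommGroup E] [Module 𝕜 E] [TopologicalSpace E] [IsTopologicalAddGroup E]
    [LocallyCompactSpace E] [AddCommGroup F] [Module 𝕜 F] [TopologicalSpace F]
    [AddCommGroup E'] [Module 𝕜 E'] [TopologicalSpace E'] [IsTopologicalAddGroup E']
    [LocallyCompactSpace E'] [AddCommGroup F'] [Module 𝕜 F'] [TopologicalSpace F']
    [ContinuousAdd F']
    (T : WithLp p (E × F) →L[𝕜] WithLp q (E' × F'))
    (hT : IsCompactOperator fun y : F => (T (WithLp.toLp p (0, y))).snd) :
    IsCompactOperator T := by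
  have fst_compact : IsCompactOperator fun x => (T x).fst :=
    isCompactOperator_of_locallyCompactSpace_dom (WithLp.fstL q 𝕜 E' F' ∘L T)
  let inlL : E →L[𝕜] WithLp p (E × F) :=
    (WithLp.prodContinuousLinearEquiv p 𝕜 E F).symm ∘L ContinuousLinearMap.inl 𝕜 E F
  have first_column_compact : IsCompactOperator fun x : E => (T (WithLp.toLp p (x, 0))).snd :=
    isCompactOperator_of_locallyCompactSpace_rng (WithLp.sndL q 𝕜 E' F' ∘L T ∘L inlL)
  have snd_T : (fun x => (T x).snd) = fun x =>
      (T (WithLp.toLp p (x.fst, 0))).snd + (T (WithLp.toLp p (0, x.snd))).snd := by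
    funext x
    rw [← WithLp.add_snd, ← map_add, ← WithLp.toLp_add, Prod.mk_add_mk, add_zero, zero_add]
    rfl
  have snd_compact : IsCompactOperator fun x => (T x).snd :=
    snd_T ▸ (first_column_compact.comp_clm (WithLp.fstL p 𝕜 E F)).add
      (hT.comp_clm (WithLp.sndL p 𝕜 E F))
  exact (isCompactOperator_prodMk fst_compact snd_compact).clm_comp
    (WithLp.prodContinuousLinearEquiv q 𝕜 E' F').symm.toContinuousLinearMap

/-- Pairing with `k(x, ·) ∈ L^{p'}` depends norm-continuously on `x`, so the operator is compact
already as a map from `L^p` to `C(X)`. -/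
theorem isCompactOperator_of_ae_eq_integral_continuous_kernel {𝕜 X Y : Type*} [RCLike 𝕜]
    [TopologicalSpace X] [CompactSpace X] [MeasurableSpace X] [BorelSpace X]
    [TopologicalSpace Y] [CompactSpace Y] [MeasurableSpace Y] [BorelSpace Y] {p q : ENNReal}
    [Fact (1 ≤ p)] [Fact (1 ≤ q)] {μ : Measure X} [IsFiniteMeasure μ]
    {ν : Measure Y} [IsFiniteMeasure ν] (k : C(X × Y, 𝕜)) (S : Lp 𝕜 p ν → Lp 𝕜 q μ)
    (hS : ∀ g, S g =ᵐ[μ] fun x => ∫ y, k (x, y) * g y ∂ν) : IsCompactOperator S := by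
  have : Fact (1 ≤ p.conjExponent) := ⟨by simp [ENNReal.conjExponent]⟩
  let pair := (ContinuousLinearMap.mul 𝕜 𝕜).lpPairing ν p.conjExponent p
  let toLp := ContinuousMap.toLp (E := 𝕜) p.conjExponent ν 𝕜
  let L : C(X, Lp 𝕜 p ν →L[𝕜] 𝕜) := ⟨fun x => pair (toLp (k.curry x)), by fun_prop⟩
  have L_apply : ∀ x g, L x g = ∫ y, k (x, y) * g y ∂ν := fun x g => by
    refine (ContinuousLinearMap.lpPairing_eq_integral _ _ _).trans (integral_congr_ae ?_)
    filter_upwards [ContinuousMap.coeFn_toLp (p := p.conjExponent) (𝕜 := 𝕜) ν (k.curry x)]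
      with y hy
    rw [hy]
    rfl
  have S_eq : S = fun g =>
      ContinuousMap.toLp (E := 𝕜) q μ 𝕜 ⟨fun x => L x g, by fun_prop⟩ := by
    refine funext fun g => Lp.ext ?_
    filter_upwards [hS g, ContinuousMap.coeFn_toLp (p := q) (𝕜 := 𝕜) μ
      ⟨fun x => L x g, by fun_prop⟩] with x hSx hLx
    exact hSx.trans ((L_apply x g).symm.trans hLx.symm)
  exact S_eq ▸ (isCompactOperator_eval_family L).clm_comp (ContinuousMap.toLp (E := 𝕜) q μ 𝕜)

theorem ofReal_sub_ne_zero_of_notMem_Icc_iInf_iSup {ι : Type*} {f : ι → ℝ}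
    (hbelow : BddBelow (range f)) (habove : BddAbove (range f)) {z : ℂ}
    (hz : z ∉ ofReal '' Icc (⨅ i, f i) (⨆ i, f i)) (i : ι) :
    (f i : ℂ) - z ≠ 0 := fun h =>
  hz ⟨f i, ⟨ciInf_le hbelow i, le_ciSup habove i⟩, sub_eq_zero.1 h⟩

/-- The integral kernel of `T₁₁(K, z)`: the prefactor `v₁(p) / (2Δ_K(p; z))` is moved inside the
integral. -/
def T11Kernel (v₁ : Td d → ℝ) (w₁ : Td d → Td d → ℝ) (w₂ : Td d → Td d → Td d → ℝ)
    (K : Td d) (z : ℂ) (x : Td d × Td d) : ℂ :=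
  (v₁ x.1 : ℂ) * (v₁ x.2 : ℂ) /
    (2 * Delta v₁ w₁ w₂ K x.1 z * ((w₂ K x.1 x.2 : ℂ) - z))

section Kernel

variable {v₁ : Td d → ℝ} {w₁ : Td d → Td d → ℝ} {w₂ : Td d → Td d → Td d → ℝ} {K : Td d} {z : ℂ}

theorem w₂_sub_ne_zero (hw₂ : Continuous fun x : Td d × Td d => w₂ K x.1 x.2)
    (hz : z ∉ bigBand w₂ K) (p q : Td d) : (w₂ K p q : ℂ) - z ≠ 0 :=
  have hrange := isCompact_range hw₂
  ofReal_sub_ne_zero_of_notMem_Icc_iInf_iSup hrange.bddBelow hrange.bddAbove hz (p, q)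

theorem bandKk_subset_bigBand (hw₂ : Continuous fun x : Td d × Td d => w₂ K x.1 x.2)
    (k : Td d) : bandKk w₂ K k ⊆ bigBand w₂ K :=
  have hrange := isCompact_range hw₂
  image_mono (Icc_subset_Icc (le_ciInf fun q => ciInf_le hrange.bddBelow (k, q))
    (ciSup_le fun q => le_ciSup hrange.bddAbove (k, q)))

theorem Delta_ne_zero (hw₂ : Continuous fun x : Td d × Td d => w₂ K x.1 x.2)
    (hz : z ∉ SigK v₁ w₁ w₂ K) (p : Td d) : Delta v₁ w₁ w₂ K p z ≠ 0 := fun h =>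
  hz (Or.inr ⟨p, fun hp => hz (Or.inl (bandKk_subset_bigBand hw₂ p hp)), h⟩)

theorem continuous_Delta (hv₁ : Continuous v₁) (hw₁ : Continuous (w₁ K))
    (hw₂ : Continuous fun x : Td d × Td d => w₂ K x.1 x.2) (hz : z ∉ bigBand w₂ K) :
    Continuous fun p => Delta v₁ w₁ w₂ K p z := by
  have integrand_continuous : Continuous (Function.uncurry fun p t : Td d =>
      (v₁ t : ℂ) ^ 2 / ((w₂ K p t : ℂ) - z)) :=
    .div (by fun_prop) (by fun_prop) fun x => w₂_sub_ne_zero hw₂ hz x.1 x.2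
  have integral_continuous := continuous_parametric_integral_of_continuous
    (μ := (volume : Measure (Td d))) integrand_continuous isCompact_univ
  rw [Measure.restrict_univ] at integral_continuous
  unfold Delta
  fun_prop

theorem continuous_T11Kernel (hv₁ : Continuous v₁) (hw₁ : Continuous (w₁ K))
    (hw₂ : Continuous fun x : Td d × Td d => w₂ K x.1 x.2) (hz : z ∉ SigK v₁ w₁ w₂ K) :
    Continuous (T11Kernel v₁ w₁ w₂ K z) := by
  have hband : z ∉ bigBand w₂ K := fun h => hz (Or.inl h)
  have hDelta := continuous_Delta hv₁ hw₁ hw₂ hband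
  exact .div (by fun_prop) (by fun_prop) fun x =>
    mul_ne_zero (mul_ne_zero two_ne_zero (Delta_ne_zero hw₂ hz x.1))
      (w₂_sub_ne_zero hw₂ hband x.1 x.2)

theorem pk2_apply_toLp_zero_ae_eq_integral_T11Kernel {w₀ v₀ : Td d → ℝ} {T : Hkk d →L[ℂ] Hkk d}
    (hT : IsTOp w₀ v₀ v₁ w₁ w₂ K z T) (g : L2 d) :
    pk2 (T (WithLp.toLp 2 (0, g))) =ᵐ[volume]
      fun p => ∫ t, T11Kernel v₁ w₁ w₂ K z (p, t) * g t := by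
  filter_upwards [(hT (WithLp.toLp 2 (0, g))).2] with p hp
  rw [hp, ← integral_const_mul]
  simp only [pk1, pk2, WithLp.equiv_apply, mul_zero, neg_zero, zero_div, zero_add, T11Kernel]
  congr 1 with t
  simp only [div_eq_mul_inv, mul_inv]
  ring

end Kernel

theorem T_HilbertSchmidt_and_compact_general
    (w₀ v₀ v₁ : Td d → ℝ) (w₁ : Td d → Td d → ℝ) (w₂ : Td d → Td d → Td d → ℝ) (K : Td d)
    (hv₁ : Continuous v₁) (hw₁ : Continuous (w₁ K))
    (hw₂ : Continuous fun x : Td d × Td d => w₂ K x.1 x.2)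
    (z : ℂ) (hz : z ∉ SigK v₁ w₁ w₂ K)
    (T : Hkk d →L[ℂ] Hkk d) (hT : IsTOp w₀ v₀ v₁ w₁ w₂ K z T) :
    MemLp (T11Kernel v₁ w₁ w₂ K z) 2 (volume : Measure (Td d × Td d)) ∧
      IsCompactOperator T := by
  have hk := continuous_T11Kernel hv₁ hw₁ hw₂ hz
  exact ⟨hk.memLp_of_hasCompactSupport (.of_compactSpace _),
    isCompactOperator_withLp_of_corner T <|
      isCompactOperator_of_ae_eq_integral_continuous_kernel ⟨_, hk⟩ _
        (pk2_apply_toLp_zero_ae_eq_integral_T11Kernel hT)⟩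

/-- For every `K ∈ T^d` and `z ∈ ℂ \ Σ_K`, the operator `T₁₁(K,z)` is a
Hilbert–Schmidt integral operator (its kernel is square integrable) and `T(K,z)` is a compact
operator on `ℂ ⊕ L²(T^d)`. -/
theorem T_HilbertSchmidt_and_compact
    (d : ℕ) (hd : 1 ≤ d)
    (w₀ v₀ v₁ : Td d → ℝ) (w₁ : Td d → Td d → ℝ) (w₂ : Td d → Td d → Td d → ℝ)
    (hw₀ : Continuous w₀) (hv₀ : Continuous v₀) (hv₁ : Continuous v₁)
    (hw₁ : Continuous fun x : Td d × Td d => w₁ x.1 x.2)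
    (hw₂ : Continuous fun x : Td d × Td d × Td d => w₂ x.1 x.2.1 x.2.2)
    (hsym : ∀ K p q : Td d, w₂ K p q = w₂ K q p)
    (K : Td d) (z : ℂ) (hz : z ∉ SigK v₁ w₁ w₂ K)
    (T : Hkk d →L[ℂ] Hkk d) (hT : IsTOp w₀ v₀ v₁ w₁ w₂ K z T) :
    MemLp (fun x : Td d × Td d =>
        (v₁ x.1 : ℂ) * (v₁ x.2 : ℂ) /
          (2 * Delta v₁ w₁ w₂ K x.1 z * ((w₂ K x.1 x.2 : ℂ) - z))) 2
      (volume : Measure (Td d × Td d)) ∧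
    IsCompactOperator T :=
  T_HilbertSchmidt_and_compact_general w₀ v₀ v₁ w₁ w₂ K hv₁ (hw₁.comp (.prodMk_right K))
    (hw₂.comp (.prodMk_right K)) z hz T hT
end
end

section
/- Let K ∈ T^d, let z ∈ ℂ \ [m_K, M_K], and suppose f = (f_0, f_1, f_2) is an eigenvector of H(K) with eigenvalue z. Then the two-particle component is determined by the one-particle component: f_2(p, q) = −(v_1(q) f_1(p) + v_1(p) f_1(q)) / (2(w_2(K; p, q) − z)) for almost every (p, q) ∈ (T^d)². -/
open MeasureTheory Complex Filter Topology Set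

noncomputable section

/-- The swap map on `L²((T^d)²)`, `(S f)(p,q) = f(q,p)`. -/
def swapL (d : ℕ) : L2two d →ₗ[ℂ] L2two d :=
  Lp.compMeasurePreservingₗ ℂ Prod.swap MeasureTheory.Measure.measurePreserving_swap

/-- The subspace `L²_sym((T^d)²)` of symmetric functions, as the fixed-point space of swap. -/
def symSub (d : ℕ) : Submodule ℂ (L2two d) := LinearMap.ker (swapL d - LinearMap.id)

abbrev L2sym (d : ℕ) := ↥(symSub d)

instance (d : ℕ) : CompleteSpace (L2sym d) := by
  have hiso : Isometry (swapL d) :=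
    Lp.isometry_compMeasurePreserving MeasureTheory.Measure.measurePreserving_swap
  have hcl : IsClosed ((symSub d : Set (L2two d))) := by
    have h1 : (symSub d : Set (L2two d)) = {f | swapL d f = f} := by
      ext f
      simp [symSub, LinearMap.mem_ker, sub_eq_zero, LinearMap.sub_apply]
    rw [h1]
    exact isClosed_eq hiso.continuous continuous_id
  exact hcl.completeSpace_coe

/-- The Hilbert space `H = ℂ ⊕ L²(T^d) ⊕ L²_sym((T^d)²)`. -/
abbrev H3 (d : ℕ) := WithLp 2 (ℂ × WithLp 2 (L2 d × L2sym d))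

/-- The zero-particle component. -/
def p0 {d : ℕ} (f : H3 d) : ℂ := (WithLp.equiv 2 _ f).1

/-- The one-particle component. -/
def p1 {d : ℕ} (f : H3 d) : L2 d := (WithLp.equiv 2 _ ((WithLp.equiv 2 _ f).2)).1

/-- The two-particle component, as an element of `L²((T^d)²)`. -/
def p2 {d : ℕ} (f : H3 d) : L2two d :=
  ((WithLp.equiv 2 _ ((WithLp.equiv 2 _ f).2)).2 : L2sym d)

variable {d : ℕ}

/-- The defining equations of the `3×3` operator matrix `H(K)` acting on
`ℂ ⊕ L²(T^d) ⊕ L²_sym((T^d)²)`: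
`(H f)₀ = w₀(K) f₀ + ∫ v₀(t) f₁(t) dt`,
`(H f)₁(p) = v₀(p) f₀ + w₁(K; p) f₁(p) + ∫ v₁(t) f₂(p,t) dt`,
`(H f)₂(p,q) = (1/2)(v₁(p) f₁(q) + v₁(q) f₁(p)) + w₂(K; p,q) f₂(p,q)`. -/
def IsHamiltonian {d : ℕ} (w₀ v₀ v₁ : Td d → ℝ) (w₁ : Td d → Td d → ℝ)
    (w₂ : Td d → Td d → Td d → ℝ) (K : Td d) (H : H3 d →L[ℂ] H3 d) : Prop :=
  ∀ f : H3 d,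
    (p0 (H f) = (w₀ K : ℂ) * p0 f + (∫ t, (v₀ t : ℂ) * (p1 f) t)) ∧
    (⇑(p1 (H f)) =ᵐ[volume] fun p =>
        (v₀ p : ℂ) * p0 f + (w₁ K p : ℂ) * (p1 f) p +
          (∫ t, (v₁ t : ℂ) * (p2 f) (p, t))) ∧
    (⇑(p2 (H f)) =ᵐ[volume] fun x : Td d × Td d =>
        ((v₁ x.1 : ℂ) * (p1 f) x.2 + (v₁ x.2 : ℂ) * (p1 f) x.1) / 2 +
          (w₂ K x.1 x.2 : ℂ) * (p2 f) x)

/-!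
The two-particle block of `H(K)` is multiplication by `w₂`, so the third row of `H f = z f` reads
`(w₂ - z) f₂ = -(v₁ ⊗ f₁ + f₁ ⊗ v₁) / 2`. It is solved for `f₂` by dividing by `w₂ - z`, which is
nonzero almost everywhere exactly when `z` is not an eigenvalue of multiplication by `w₂`; this
holds in particular for `z` outside `[m_K, M_K]`, the convex hull of the range of `w₂(K; ·, ·)`.
-/

theorem eventuallyEq_neg_div_sub_of_smul_eventuallyEq {α 𝕜 : Type*} [Field 𝕜] {l : Filter α}
    {g s m : α → 𝕜} {z : 𝕜} (hm : ∀ᶠ x in l, m x ≠ z) (hg : z • g =ᶠ[l] s + m * g) :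
    g =ᶠ[l] fun x => -(s x / (m x - z)) := by
  filter_upwards [hm, hg] with x hmx hgx
  simp only [Pi.smul_apply, Pi.add_apply, Pi.mul_apply, smul_eq_mul] at hgx
  rw [← neg_div, eq_div_iff (sub_ne_zero.mpr hmx)]
  linear_combination -hgx

theorem ofReal_mem_bigBand {w₂ : Td d → Td d → Td d → ℝ} {K : Td d}
    (hw₂ : Continuous fun x : Td d × Td d => w₂ K x.1 x.2) (x : Td d × Td d) :
    (w₂ K x.1 x.2 : ℂ) ∈ bigBand w₂ K :=
  have hrange := isCompact_range hw₂
  mem_image_of_mem _ ⟨ciInf_le hrange.bddBelow x, le_ciSup hrange.bddAbove x⟩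

theorem p2_smul (c : ℂ) (f : H3 d) : p2 (c • f) = c • p2 f := rfl

theorem IsHamiltonian.smul_p2_ae_eq {w₀ v₀ v₁ : Td d → ℝ} {w₁ : Td d → Td d → ℝ}
    {w₂ : Td d → Td d → Td d → ℝ} {K : Td d} {z : ℂ} {H : H3 d →L[ℂ] H3 d}
    (hH : IsHamiltonian w₀ v₀ v₁ w₁ w₂ K H) {f : H3 d} (hf : H f = z • f) :
    z • ⇑(p2 f) =ᵐ[volume]
      (fun x : Td d × Td d => ((v₁ x.1 : ℂ) * p1 f x.2 + (v₁ x.2 : ℂ) * p1 f x.1) / 2) +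
        (fun x => (w₂ K x.1 x.2 : ℂ)) * ⇑(p2 f) := by
  obtain ⟨-, -, hrow⟩ := hH f
  rw [hf, p2_smul] at hrow
  exact (Lp.coeFn_smul z (p2 f)).symm.trans hrow

theorem eigenvector_two_particle_component_general
    {w₀ v₀ v₁ : Td d → ℝ} {w₁ : Td d → Td d → ℝ} {w₂ : Td d → Td d → Td d → ℝ}
    {K : Td d} {z : ℂ} (hz : ∀ᵐ x : Td d × Td d, (w₂ K x.1 x.2 : ℂ) ≠ z)
    {H : H3 d →L[ℂ] H3 d} (hH : IsHamiltonian w₀ v₀ v₁ w₁ w₂ K H)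
    {f : H3 d} (hf : H f = z • f) :
    ⇑(p2 f) =ᵐ[volume] fun x : Td d × Td d =>
      -(((v₁ x.2 : ℂ) * (p1 f) x.1 + (v₁ x.1 : ℂ) * (p1 f) x.2) /
        (2 * ((w₂ K x.1 x.2 : ℂ) - z))) := by
  filter_upwards [eventuallyEq_neg_div_sub_of_smul_eventuallyEq hz (hH.smul_p2_ae_eq hf)] with x hx
  rw [hx, div_div, add_comm]

/-- If `z ∈ ℂ \ [m_K, M_K]` and `f = (f₀, f₁, f₂)` is an eigenvector of
`H(K)` with eigenvalue `z`, then
`f₂(p,q) = −(v₁(q) f₁(p) + v₁(p) f₁(q)) / (2(w₂(K;p,q) − z))` for a.e. `(p,q)`. -/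
theorem eigenvector_two_particle_component
    (d : ℕ) (hd : 1 ≤ d)
    (w₀ v₀ v₁ : Td d → ℝ) (w₁ : Td d → Td d → ℝ) (w₂ : Td d → Td d → Td d → ℝ)
    (hw₀ : Continuous w₀) (hv₀ : Continuous v₀) (hv₁ : Continuous v₁)
    (hw₁ : Continuous fun x : Td d × Td d => w₁ x.1 x.2)
    (hw₂ : Continuous fun x : Td d × Td d × Td d => w₂ x.1 x.2.1 x.2.2)
    (hsym : ∀ K p q : Td d, w₂ K p q = w₂ K q p)
    (K : Td d) (z : ℂ) (hz : z ∉ bigBand w₂ K)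
    (H : H3 d →L[ℂ] H3 d) (hH : IsHamiltonian w₀ v₀ v₁ w₁ w₂ K H)
    (f : H3 d) (hf0 : f ≠ 0) (hf : H f = z • f) :
    ⇑(p2 f) =ᵐ[volume] fun x : Td d × Td d =>
      -(((v₁ x.2 : ℂ) * (p1 f) x.1 + (v₁ x.1 : ℂ) * (p1 f) x.2) /
        (2 * ((w₂ K x.1 x.2 : ℂ) - z))) := by
  have hw₂K : Continuous fun x : Td d × Td d => w₂ K x.1 x.2 :=
    hw₂.comp (Continuous.prodMk_right K)
  exact eigenvector_two_particle_component_general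
    (ae_of_all _ fun x => ne_of_mem_of_not_mem (ofReal_mem_bigBand hw₂K x) hz) hH hf
end
end
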